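/- Every history-deterministic coBüchi automaton that recognises the complement Σ^ω ∖ L_main has at least 61 states. -/

import Mathlib

/-- A (nondeterministic) Büchi/coBüchi automaton: an initial state, a set of
transitions, and a subset of *significant* transitions. -/
structure BuchiAutomaton (σ : Type) (Q : Type) where
  init : Q
  trans : Set (Q × σ × Q)
  sig : Set (Q × σ × Q)
  sig_sub : sig ⊆ trans

namespace BuchiAutomaton

variable {σ Q : Type}

/-- `ρ` is a run of `A` on the infinite word `w`, starting at the state `p`. -/
def IsRunFrom (A : BuchiAutomaton σ Q) (p : Q) (w : ℕ → σ) (ρ : ℕ → Q) : Prop :=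
  ρ 0 = p ∧ ∀ i, (ρ i, w i, ρ (i + 1)) ∈ A.trans

/-- Büchi acceptance: the run contains infinitely many significant transitions. -/
def BuchiAcc (A : BuchiAutomaton σ Q) (w : ℕ → σ) (ρ : ℕ → Q) : Prop :=
  ∀ N, ∃ i, N ≤ i ∧ (ρ i, w i, ρ (i + 1)) ∈ A.sig

/-- coBüchi acceptance: the run contains finitely many significant transitions. -/
def CoBuchiAcc (A : BuchiAutomaton σ Q) (w : ℕ → σ) (ρ : ℕ → Q) : Prop :=
  ∃ N, ∀ i, N ≤ i → (ρ i, w i, ρ (i + 1)) ∉ A.sig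

/-- The language of `A` (as a Büchi automaton), with initial state `p`. -/
def LangFrom (A : BuchiAutomaton σ Q) (p : Q) : Set (ℕ → σ) :=
  {w | ∃ ρ, A.IsRunFrom p w ρ ∧ A.BuchiAcc w ρ}

/-- The language of `A`, read as a Büchi automaton. -/
def Lang (A : BuchiAutomaton σ Q) : Set (ℕ → σ) :=
  A.LangFrom A.init

/-- The language of `A`, read as a coBüchi automaton. -/
def CoLang (A : BuchiAutomaton σ Q) : Set (ℕ → σ) :=
  {w | ∃ ρ, A.IsRunFrom A.init w ρ ∧ A.CoBuchiAcc w ρ}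

/-- `A` is deterministic: at most one outgoing transition per state and letter. -/
def Deterministic (A : BuchiAutomaton σ Q) : Prop :=
  ∀ p a q q', (p, a, q) ∈ A.trans → (p, a, q') ∈ A.trans → q = q'

/-- `FinRun A l p`: `l` is a finite run of `A` from the initial state, ending in
the state `p` (represented as the chronological list of its transitions). -/
inductive FinRun (A : BuchiAutomaton σ Q) : List (Q × σ × Q) → Q → Prop
  | nil : FinRun A [] A.init
  | snoc {l : List (Q × σ × Q)} {p : Q} {a : σ} {q : Q} :
      FinRun A l p → (p, a, q) ∈ A.trans → FinRun A (l ++ [(p, a, q)]) q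

/-- A resolver for `A`: a function from finite runs and letters to transitions,
such that on every finite run from the initial state ending in a state `p` and
every letter `a`, it outputs a transition on `a` with source `p`. -/
structure Resolver (A : BuchiAutomaton σ Q) where
  res : List (Q × σ × Q) → σ → Q × σ × Q
  res_valid : ∀ l p a, A.FinRun l p →
    (res l a).1 = p ∧ (res l a).2.1 = a ∧ res l a ∈ A.trans

/-- The history (finite run) built by a resolver after reading `n` letters of `w`. -/
def Resolver.hist {A : BuchiAutomaton σ Q} (r : Resolver A) (w : ℕ → σ) : ℕ → List (Q × σ × Q)
  | 0 => []
  | n + 1 => r.hist w n ++ [r.res (r.hist w n) (w n)]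

/-- The run induced by the resolver on `w` satisfies the Büchi condition. -/
def Resolver.InducedBuchiAcc {A : BuchiAutomaton σ Q} (r : Resolver A) (w : ℕ → σ) : Prop :=
  ∀ N, ∃ n, N ≤ n ∧ r.res (r.hist w n) (w n) ∈ A.sig

/-- The run induced by the resolver on `w` satisfies the coBüchi condition. -/
def Resolver.InducedCoBuchiAcc {A : BuchiAutomaton σ Q} (r : Resolver A) (w : ℕ → σ) : Prop :=
  ∃ N, ∀ n, N ≤ n → r.res (r.hist w n) (w n) ∉ A.sig

/-- `A` is history-deterministic (as a Büchi automaton). -/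
def HistoryDeterministic (A : BuchiAutomaton σ Q) : Prop :=
  ∃ r : Resolver A, ∀ w ∈ A.Lang, r.InducedBuchiAcc w

/-- `A` is history-deterministic (as a coBüchi automaton). -/
def CoHistoryDeterministic (A : BuchiAutomaton σ Q) : Prop :=
  ∃ r : Resolver A, ∀ w ∈ A.CoLang, r.InducedCoBuchiAcc w

end BuchiAutomaton

/-- The finite factor `w[m..n)` of the infinite word `w`, as a list. -/
def wordSegment {σ : Type} (w : ℕ → σ) (m n : ℕ) : List σ :=
  (List.range (n - m)).map fun i => w (m + i)

/-- `omegaPow X`: the infinite words that can be written as an infinite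
concatenation of finite words, each belonging to `X`. -/
def omegaPow {σ : Type} (X : Set (List σ)) : Set (ℕ → σ) :=
  {w | ∃ φ : ℕ → ℕ, φ 0 = 0 ∧ StrictMono φ ∧ ∀ k, wordSegment w (φ k) (φ (k + 1)) ∈ X}

/-- The alphabet `Σ = {a, b, c, 1, …, 6, r₁, …, r₆, y}` (with `num i` the digit
`i+1` and `res i` the reset letter `r_{i+1}`). -/
inductive Al : Type
  | a | b | c
  | num (i : Fin 6)
  | res (i : Fin 6)
  | y
deriving DecidableEq, Fintype

/-- The states of the classifier DFA. -/
inductive CSt : Type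
  | p | q | t | s | r
  | ell (i : Fin 6)
deriving DecidableEq, Fintype

/-- The (partial) transition function of the classifier. A digit `num i` belongs
to `E = {1,2,3}` iff `i.val < 3`, and to `F = {4,5,6}` otherwise. -/
def clStep : CSt → Al → Option CSt
  | .p, .b => some .p
  | .p, .num _ => some .p
  | .p, .y => some .p
  | .p, .a => some .q
  | .p, .c => some .t
  | .q, .a => some .q
  | .q, .num _ => some .p
  | .q, .y => some .p
  | .q, .b => some .r
  | .q, .c => some .s
  | .t, .c => some .t
  | .t, .b => some .p
  | .t, .a => some .q
  | .t, .num i => if i.val < 3 then some (.ell i) else some .p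
  | .t, .y => some .p
  | .s, .c => some .s
  | .s, .b => some .r
  | .s, .a => some .q
  | .s, .num i => if i.val < 3 then some (.ell i) else some .p
  | .s, .y => some .p
  | .r, .b => some .r
  | .r, .a => some .q
  | .r, .c => some .s
  | .r, .num i => if 3 ≤ i.val then some (.ell i) else some .p
  | .r, .y => some .p
  | _, _ => none

/-- The run of the classifier on a finite word, from a given state. -/
def clRun : CSt → List Al → Option CSt
  | c, [] => some c
  | c, l :: w =>
    match clStep c l with
    | some c' => clRun c' w
    | none => none

/-- The language `L_α` (for `α : Fin 6`, representing `L_{α+1}`): the finite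
words whose run in the classifier from `p` is defined and ends in `ℓ_α`. -/
def Lcl (α : Fin 6) : Set (List Al) :=
  {w | clRun .p w = some (.ell α)}

/-- `L_main = (Σ^* ⋃_{α≠β} (L_α ∪ {r_α}) L_β L_β Σ^* y)^ω`. -/
def LMain : Set (ℕ → Al) :=
  omegaPow {w | ∃ α β : Fin 6, α ≠ β ∧ ∃ u v₁ v₂ v₃ z : List Al,
    (v₁ ∈ Lcl α ∨ v₁ = [Al.res α]) ∧ v₂ ∈ Lcl β ∧ v₃ ∈ Lcl β ∧
    w = u ++ v₁ ++ v₂ ++ v₃ ++ z ++ [Al.y]}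

/-!
Call an infix in `(L_α ∪ {r_α}) L_β L_β` with `α ≠ β` bad. A deterministic automaton with 60 states
can watch for bad infixes: it remembers the index of the last completed block, whether that block
follows one of another index, and the state of the classifier. One more state, on which `y` is
forbidden, gives a safety automaton all of whose safe words lie in the complement of `L_main`.

Fix a safety state `d`. After some history the resolver takes no significant transition on any
continuation that is safe from `d`; otherwise it could be made to take infinitely many along a word
that is safe from `d`. As the automaton is finite, some reachable state `q_d` then has, for every
safe word of `d`, an insignificant loop that starts with this word and returns to `d` in the safety
automaton. If `q_d = q_e` and `v` is safe from `e` but not from `d`, then a loop for `d` can be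
followed by a loop for `e` that starts with `v`. If the former synchronizes the safety automaton
with a word that starts with `y`, the combined loop contains both `y` and a bad infix, so that its
repetition is an accepted word of `L_main`. Hence the 61 states `q_d` are distinct.
-/

section InfiniteWords

variable {σ : Type}

theorem wordSegment_succ (w : ℕ → σ) (n : ℕ) :
    wordSegment w 0 (n + 1) = wordSegment w 0 n ++ [w n] := by
  simp [wordSegment, List.range_succ]

theorem wordSegment_isPrefix (w : ℕ → σ) {m n : ℕ} (h : m ≤ n) :
    wordSegment w 0 m <+: wordSegment w 0 n :=
  Nat.rel_of_forall_rel_succ_of_le (· <+: ·) (fun k => ⟨[w k], (wordSegment_succ w k).symm⟩) h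

theorem exists_word_of_prefix_chain (U : ℕ → List σ) (hU : ∀ n, U n <+: U (n + 1))
    (hlt : ∀ n, (U n).length < (U (n + 1)).length) :
    ∃ w : ℕ → σ, ∀ n x, x <+: U n → wordSegment w 0 x.length = x := by
  have hmono {m n : ℕ} (h : m ≤ n) : U m <+: U n :=
    Nat.rel_of_forall_rel_succ_of_le (· <+: ·) hU h
  have hlen (n : ℕ) : n ≤ (U n).length := (strictMono_nat_of_lt_succ hlt).le_apply
  refine ⟨fun n => (U (n + 1))[n]'(hlen (n + 1)), fun n x hx => ?_⟩
  refine List.ext_getElem (by simp [wordSegment]) fun i _ hi => ?_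
  simp only [wordSegment, List.getElem_map, List.getElem_range, Nat.zero_add]
  rw [hx.getElem hi]
  rcases le_total (i + 1) n with h | h
  · exact (hmono h).getElem _
  · exact ((hmono h).getElem _).symm

theorem wordSegment_get (w : Stream' σ) (m n : ℕ) :
    wordSegment w.get m n = (w.drop m).take (n - m) :=
  List.ext_getElem (by simp [wordSegment]) fun i _ _ => by simp [wordSegment]

theorem append_mem_omegaPow {X : Set (List σ)} {u : List σ} {w : Stream' σ} (hu : u ∈ X)
    (hne : u ≠ []) (hw : w.get ∈ omegaPow X) : (u ++ₛ w).get ∈ omegaPow X := by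
  obtain ⟨φ, hφ0, hφ, hX⟩ := hw
  let ψ : ℕ → ℕ := fun n => Nat.casesOn n 0 fun k => u.length + φ k
  refine ⟨ψ, rfl, strictMono_nat_of_lt_succ ?_, ?_⟩
  · rintro (_ | k)
    · simpa [ψ, hφ0] using List.length_pos_iff.2 hne
    · simpa [ψ] using hφ k.lt_succ_self
  · rintro (_ | k)
    · simpa [ψ, hφ0, wordSegment_get, Stream'.take_append_of_le_length] using hu
    · have hdrop : Stream'.drop (u.length + φ k) (u ++ₛ w) = Stream'.drop (φ k) w := by
        rw [← Stream'.drop_drop, Stream'.drop_append_stream]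
      simpa [ψ, wordSegment_get, hdrop, Nat.add_sub_add_left] using hX k

theorem mem_omegaPow_of_eq_append {X : Set (List σ)} {u : List σ} {w : Stream' σ} (hu : u ∈ X)
    (hne : u ≠ []) (hw : w = u ++ₛ w) : w.get ∈ omegaPow X := by
  have hdrop (k : ℕ) : w.drop (k * u.length) = w := by
    induction k with
    | zero => rw [Nat.zero_mul, Stream'.drop_zero]
    | succ k ih =>
      rw [Nat.succ_mul, ← Stream'.drop_drop, ih]
      conv_lhs => rw [hw, Stream'.drop_append_stream]
  refine ⟨(· * u.length), Nat.zero_mul _,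
    strictMono_mul_right_of_pos (List.length_pos_iff.2 hne), fun k => ?_⟩
  rw [wordSegment_get, ← Nat.sub_mul, Nat.add_sub_cancel_left, Nat.one_mul, hdrop, hw]
  simpa [Stream'.take_append_of_le_length] using hu

end InfiniteWords

section Paths

variable {σ Q : Type} {T : Set (Q × σ × Q)}

/-- `IsPath T q w q'`: some path from `q` to `q'` labelled `w` uses transitions in `T` only. -/
def IsPath (T : Set (Q × σ × Q)) : Q → List σ → Q → Prop
  | q, [], q' => q = q'
  | q, a :: w, q' => ∃ p, (q, a, p) ∈ T ∧ IsPath T p w q'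

theorem IsPath.append {u v : List σ} {q p q' : Q} (hu : IsPath T q u p) (hv : IsPath T p v q') :
    IsPath T q (u ++ v) q' := by
  induction u generalizing q with
  | nil => exact hu ▸ hv
  | cons a u ih =>
    obtain ⟨p', hp', hu⟩ := hu
    exact ⟨p', hp', ih hu⟩

theorem IsPath.concat {u : List σ} {a : σ} {q p q' : Q} (hu : IsPath T q u p)
    (ha : (p, a, q') ∈ T) : IsPath T q (u ++ [a]) q' :=
  hu.append ⟨q', ha, rfl⟩

theorem IsPath.mono {T' : Set (Q × σ × Q)} (hT : T ⊆ T') {u : List σ} {q q' : Q}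
    (hu : IsPath T q u q') : IsPath T' q u q' := by
  induction u generalizing q with
  | nil => exact hu
  | cons a u ih =>
    obtain ⟨p, hp, hu⟩ := hu
    exact ⟨p, hT hp, ih hu⟩

theorem exists_run_of_coinduction {R : Q → Stream' σ → Prop}
    (hR : ∀ p w, R p w → ∃ p', (p, w.head, p') ∈ T ∧ R p' w.tail)
    {p : Q} {w : Stream' σ} (h : R p w) :
    ∃ ρ : ℕ → Q, ρ 0 = p ∧ ∀ i, (ρ i, w.get i, ρ (i + 1)) ∈ T := by
  choose! next hnext hstep using hR
  let ρ : ℕ → Q := Nat.rec p fun i q => next q (w.drop i)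
  have hρ (i : ℕ) : R (ρ i) (w.drop i) := by
    induction i with
    | zero => exact h
    | succ i ih => simpa [ρ, Stream'.tail_drop] using hstep _ _ ih
  exact ⟨ρ, rfl, fun i => by simpa [ρ, Stream'.head_drop] using hnext _ _ (hρ i)⟩

theorem exists_run_cycle {q : Q} {v : List σ} (hv : v ≠ []) (hloop : IsPath T q v q) :
    ∃ ρ : ℕ → Q, ρ 0 = q ∧ ∀ i, (ρ i, (Stream'.cycle v hv).get i, ρ (i + 1)) ∈ T := by
  let R : Q → Stream' σ → Prop := fun p w => ∃ u, IsPath T p u q ∧ w = u ++ₛ Stream'.cycle v hv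
  have hcons {p : Q} {a : σ} {u : List σ} (h : IsPath T p (a :: u) q) :
      ∃ p', (p, a, p') ∈ T ∧ R p' (u ++ₛ Stream'.cycle v hv) :=
    let ⟨p', hp', hu⟩ := h
    ⟨p', hp', u, hu, rfl⟩
  refine exists_run_of_coinduction (R := R) ?_ ⟨[], rfl, rfl⟩
  rintro p _ ⟨_ | ⟨a, u⟩, hu, rfl⟩
  · obtain ⟨b, v', rfl⟩ := List.exists_cons_of_ne_nil hv
    rw [Stream'.nil_append_stream, Stream'.cycle_eq]
    exact hcons (hu ▸ hloop)
  · exact hcons hu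

variable {A : BuchiAutomaton σ Q}

theorem IsPath.exists_coBuchiAcc_append {x : List σ} {p q : Q} {w : Stream' σ}
    (hx : IsPath A.trans p x q) (hw : ∃ ρ, A.IsRunFrom q w.get ρ ∧ A.CoBuchiAcc w.get ρ) :
    ∃ ρ, A.IsRunFrom p (x ++ₛ w).get ρ ∧ A.CoBuchiAcc (x ++ₛ w).get ρ := by
  induction x generalizing p with
  | nil => exact hx ▸ hw
  | cons a x ih =>
    obtain ⟨p', hp', hx⟩ := hx
    obtain ⟨ρ, ⟨rfl, hρ⟩, N, hN⟩ := ih hx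
    refine ⟨fun n => Nat.casesOn n p ρ, ⟨rfl, ?_⟩, N + 1, ?_⟩
    · rintro (_ | i)
      · exact hp'
      · exact hρ i
    · rintro (_ | i) hi
      · omega
      · exact hN i (by omega)

theorem append_cycle_mem_coLang {q : Q} {x v : List σ} (hv : v ≠ [])
    (hx : IsPath A.trans A.init x q) (hloop : IsPath (A.trans \ A.sig) q v q) :
    (x ++ₛ Stream'.cycle v hv).get ∈ A.CoLang :=
  let ⟨ρ, hρ0, hρ⟩ := exists_run_cycle hv hloop
  hx.exists_coBuchiAcc_append ⟨ρ, ⟨hρ0, fun i => (hρ i).1⟩, 0, fun i _ => (hρ i).2⟩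

end Paths

section Safety

variable {σ S Q : Type} {step : S → σ → Option S} {d e : S}

/-- The safe words of the state `d` of a partial deterministic automaton `step`, which is read as
a safety automaton: the words on which it has a run from `d`. -/
def SafeLang (step : S → σ → Option S) (d : S) : Set (List σ) :=
  {u | (u.foldlM step d).isSome}

theorem foldlM_append_of_eq_some {u v : List σ} (hu : u.foldlM step d = some e) :
    (u ++ v).foldlM step d = v.foldlM step e := by
  rw [List.foldlM_append, hu, Option.bind_eq_bind, Option.bind_some]

theorem foldlM_append_of_eq_none {u v : List σ} (hu : u.foldlM step d = none) :
    (u ++ v).foldlM step d = none := by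
  rw [List.foldlM_append, hu, Option.bind_eq_bind, Option.bind_none]

theorem mem_safeLang_iff {u : List σ} : u ∈ SafeLang step d ↔ ∃ e, u.foldlM step d = some e :=
  Option.isSome_iff_exists

theorem notMem_safeLang_iff {u : List σ} : u ∉ SafeLang step d ↔ u.foldlM step d = none :=
  Option.not_isSome_iff_eq_none

theorem mem_safeLang_of_isPrefix {u v : List σ} (huv : u <+: v) (hv : v ∈ SafeLang step d) :
    u ∈ SafeLang step d := by
  obtain ⟨z, rfl⟩ := huv
  contrapose! hv
  exact notMem_safeLang_iff.2 (foldlM_append_of_eq_none (notMem_safeLang_iff.1 hv))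

/-- Every safe word of `d` can be prolonged to a word leading back to `d`. -/
def IsReturning (step : S → σ → Option S) (d : S) : Prop :=
  ∀ u ∈ SafeLang step d, ∃ z, (u ++ z).foldlM step d = some d

/-- The state `q` simulates the state `d` of the safety automaton `step` by transitions in `T`:
`R` is a simulation. -/
def Simulates (T : Set (Q × σ × Q)) (step : S → σ → Option S) (q : Q) (d : S) : Prop :=
  ∃ R : Q → S → Prop, R q d ∧
    ∀ q d a d', R q d → step d a = some d' → ∃ q', (q, a, q') ∈ T ∧ R q' d'

/-- Every safe word of `d` can be prolonged to a word that leads from `d` back to `d` in the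
safety automaton and labels a path from `q` back to `q` with transitions in `T`. -/
def IsRecurrentFor (T : Set (Q × σ × Q)) (step : S → σ → Option S) (q : Q) (d : S) : Prop :=
  ∀ u ∈ SafeLang step d, ∃ z, (u ++ z).foldlM step d = some d ∧ IsPath T q (u ++ z) q

variable {T : Set (Q × σ × Q)} {q : Q}

theorem Simulates.exists_isPath (h : Simulates T step q d) {u : List σ}
    (hu : u.foldlM step d = some e) : ∃ q', IsPath T q u q' ∧ Simulates T step q' e := by
  obtain ⟨R, hqd, hR⟩ := h
  induction u generalizing q d with
  | nil => exact ⟨q, rfl, R, Option.some.inj hu ▸ hqd, hR⟩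
  | cons a u ih =>
    obtain ⟨d', hd', hu⟩ := Option.bind_eq_some_iff.1 (List.foldlM_cons.symm.trans hu)
    obtain ⟨p, hp, hpd⟩ := hR q d a d' hqd hd'
    obtain ⟨q', hq', hsim⟩ := ih hu hpd
    exact ⟨q', ⟨p, hp, hq'⟩, hsim⟩

/-- Order the states simulating `d` by reachability along words leading from `d` back to `d`:
the maximal elements are recurrent. -/
theorem Simulates.exists_isRecurrentFor [Finite Q] (h : Simulates T step q d)
    (hd : IsReturning step d) : ∃ q' u, IsPath T q u q' ∧ IsRecurrentFor T step q' d := by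
  let _ : Preorder {q // Simulates T step q d} :=
    { le p p' := ∃ u, u.foldlM step d = some d ∧ IsPath T p u p'
      le_refl p := ⟨[], rfl, rfl⟩
      le_trans := fun _ _ _ ⟨u, hu, hpath⟩ ⟨v, hv, hpath'⟩ =>
        ⟨u ++ v, (foldlM_append_of_eq_some hu).trans hv, hpath.append hpath'⟩ }
  obtain ⟨⟨q', _⟩, ⟨x, _, hx⟩, hmax⟩ := Finite.exists_le_maximal (p := fun _ => True)
    (a := (⟨q, h⟩ : {q // Simulates T step q d})) trivial
  refine ⟨q', x, hx, fun u hu => ?_⟩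
  obtain ⟨z, hz⟩ := hd u hu
  obtain ⟨p, hp, hsim⟩ := Simulates.exists_isPath ‹_› hz
  obtain ⟨v, hv, hback⟩ := hmax.2 (y := ⟨p, hsim⟩) trivial ⟨_, hz, hp⟩
  exact ⟨z ++ v, by rw [← List.append_assoc, foldlM_append_of_eq_some hz, hv],
    by simpa using hp.append hback⟩

theorem IsRecurrentFor.exists_loop (hd : IsRecurrentFor T step q d)
    (he : IsRecurrentFor T step q e) {s v : List σ} (hs : s.foldlM step d = some d)
    (hvd : v ∉ SafeLang step d) (hve : v ∈ SafeLang step e) :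
    ∃ u z, u ∉ SafeLang step d ∧ IsPath T q (s ++ u ++ z) q := by
  obtain ⟨z, hz, hsz⟩ := hd s (mem_safeLang_iff.2 ⟨d, hs⟩)
  obtain ⟨z', -, hvz'⟩ := he v hve
  rw [foldlM_append_of_eq_some hs] at hz
  refine ⟨z ++ v, z', ?_, by simpa using hsz.append hvz'⟩
  rwa [notMem_safeLang_iff, foldlM_append_of_eq_some hz, ← notMem_safeLang_iff]

/-- The word `s` leads from `d` back to `d`, and whatever was read before, reading `s` and then a
word that is unsafe from `d` is an error: repeating it forever leads out of `L`. For the lower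
bound it is enough to demand this of ultimately periodic words. -/
def IsReset (L : Set (ℕ → σ)) (step : S → σ → Option S) (d : S) (s : List σ) : Prop :=
  s.foldlM step d = some d ∧ ∀ x v (hv : v ≠ []), (∃ u, u ∉ SafeLang step d ∧ s ++ u <+: v) →
    (x ++ₛ Stream'.cycle v hv).get ∉ L

end Safety

namespace BuchiAutomaton

variable {σ S Q : Type} {A : BuchiAutomaton σ Q} {step : S → σ → Option S} {d : S}

namespace Resolver

/-- The finite run built by the resolver on a finite word. -/
def runOn (r : Resolver A) (x : List σ) : List (Q × σ × Q) :=
  x.foldl (fun l a => l ++ [r.res l a]) []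

/-- The state reached by the resolver after a finite word. -/
def stateAfter (r : Resolver A) (x : List σ) : Q :=
  (r.runOn x).getLast?.elim A.init fun t => t.2.2

variable (r : Resolver A)

theorem runOn_concat (x : List σ) (a : σ) :
    r.runOn (x ++ [a]) = r.runOn x ++ [r.res (r.runOn x) a] := by
  simp [runOn]

theorem stateAfter_concat (x : List σ) (a : σ) :
    r.stateAfter (x ++ [a]) = (r.res (r.runOn x) a).2.2 := by
  simp [stateAfter, runOn_concat]

theorem hist_eq_runOn (w : ℕ → σ) (n : ℕ) : r.hist w n = r.runOn (wordSegment w 0 n) := by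
  induction n with
  | zero => rfl
  | succ n ih => rw [hist, wordSegment_succ, runOn_concat, ih]

theorem finRun_runOn (x : List σ) : A.FinRun (r.runOn x) (r.stateAfter x) := by
  induction x using List.reverseRecOn with
  | nil => exact .nil
  | append_singleton x a ih =>
    obtain ⟨hsource, -, htrans⟩ := r.res_valid _ _ a ih
    rw [runOn_concat, stateAfter_concat]
    exact .snoc (hsource ▸ ih) htrans

theorem res_runOn (x : List σ) (a : σ) :
    r.res (r.runOn x) a = (r.stateAfter x, a, r.stateAfter (x ++ [a])) := by
  obtain ⟨hsource, hletter, -⟩ := r.res_valid _ _ a (r.finRun_runOn x)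
  exact Prod.ext hsource (Prod.ext hletter (r.stateAfter_concat x a).symm)

theorem stateAfter_mem_trans (x : List σ) (a : σ) :
    (r.stateAfter x, a, r.stateAfter (x ++ [a])) ∈ A.trans :=
  r.res_runOn x a ▸ (r.res_valid _ _ a (r.finRun_runOn x)).2.2

theorem isPath_stateAfter (x : List σ) : IsPath A.trans A.init x (r.stateAfter x) := by
  induction x using List.reverseRecOn with
  | nil => rfl
  | append_singleton x a ih => exact ih.concat (r.stateAfter_mem_trans x a)

/-- Otherwise every history could be prolonged along a cycle of the safety automaton with a
significant transition on the way, and doing so forever gives an accepted word on which the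
resolver fails. -/
theorem exists_forall_notMem_sig (hr : ∀ w ∈ A.CoLang, r.InducedCoBuchiAcc w)
    (hsafe : ∀ w : ℕ → σ, (∀ n, wordSegment w 0 n ∈ SafeLang step d) → w ∈ A.CoLang)
    (hd : IsReturning step d) :
    ∃ x, ∀ u a, u ++ [a] ∈ SafeLang step d →
      (r.stateAfter (x ++ u), a, r.stateAfter (x ++ u ++ [a])) ∉ A.sig := by
  by_contra! hcon
  choose u a hua hsig using hcon
  choose z hz using fun x => hd _ (hua x)
  let next : List σ → List σ := fun x => x ++ (u x ++ [a x] ++ z x)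
  let U : ℕ → List σ := fun n => next^[n] []
  have hU (n : ℕ) : U (n + 1) = U n ++ (u (U n) ++ [a (U n)] ++ z (U n)) :=
    Function.iterate_succ_apply' next n []
  have hUd (n : ℕ) : (U n).foldlM step d = some d := by
    induction n with
    | zero => rfl
    | succ n ih => rw [hU, foldlM_append_of_eq_some ih, hz]
  have hUlt (n : ℕ) : (U n).length < (U (n + 1)).length := by
    simp only [hU, List.length_append, List.length_singleton]
    omega
  have hUlen (n : ℕ) : n ≤ (U n).length := (strictMono_nat_of_lt_succ hUlt).le_apply
  obtain ⟨w, hw⟩ := exists_word_of_prefix_chain U (fun n => ⟨_, (hU n).symm⟩) hUlt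
  have hwL : w ∈ A.CoLang := hsafe w fun n =>
    mem_safeLang_of_isPrefix (wordSegment_isPrefix w (hUlen n))
      (mem_safeLang_iff.2 ⟨d, (hw n _ List.prefix_rfl).symm ▸ hUd n⟩)
  obtain ⟨N, hN⟩ := hr w hwL
  let x := U N ++ u (U N)
  have hword : wordSegment w 0 x.length ++ [w x.length] = x ++ [a (U N)] := by
    rw [← wordSegment_succ, ← hw (N + 1) (x ++ [a (U N)]) ⟨z (U N), by simp [x, hU]⟩]
    simp
  obtain ⟨hx, hletter⟩ := List.append_inj' hword rfl
  refine hN x.length ((hUlen N).trans (by simp [x])) ?_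
  rw [hist_eq_runOn, hx, List.singleton_inj.1 hletter, res_runOn]
  exact hsig (U N)

theorem exists_simulates (hr : ∀ w ∈ A.CoLang, r.InducedCoBuchiAcc w)
    (hsafe : ∀ w : ℕ → σ, (∀ n, wordSegment w 0 n ∈ SafeLang step d) → w ∈ A.CoLang)
    (hd : IsReturning step d) :
    ∃ q x, IsPath A.trans A.init x q ∧ Simulates (A.trans \ A.sig) step q d := by
  obtain ⟨x, hx⟩ := r.exists_forall_notMem_sig hr hsafe hd
  refine ⟨r.stateAfter x, x, r.isPath_stateAfter x,
    fun q e => ∃ u, u.foldlM step d = some e ∧ r.stateAfter (x ++ u) = q, ⟨[], rfl, by simp⟩, ?_⟩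
  rintro _ e a e' ⟨u, hu, rfl⟩ he'
  have hua : (u ++ [a]).foldlM step d = some e' := by simp [foldlM_append_of_eq_some hu, he']
  exact ⟨_, ⟨r.stateAfter_mem_trans (x ++ u) a, hx u a (mem_safeLang_iff.2 ⟨e', hua⟩)⟩,
    u ++ [a], hua, by rw [List.append_assoc]⟩

end Resolver

theorem ne_of_isReset {q q' : Q} {x s : List σ} {e : S} (hs : IsReset A.CoLang step d s)
    (hx : IsPath A.trans A.init x q) (hq : IsRecurrentFor (A.trans \ A.sig) step q d)
    (hq' : IsRecurrentFor (A.trans \ A.sig) step q' e)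
    (h : ¬ SafeLang step e ⊆ SafeLang step d) : q ≠ q' := by
  rintro rfl
  obtain ⟨v, hve, hvd⟩ := Set.not_subset.1 h
  obtain ⟨u, z, hu, hloop⟩ := hq.exists_loop hq' hs.1 hvd hve
  have hne : s ++ u ++ z ≠ [] := by
    have hu_ne : u ≠ [] := by
      rintro rfl
      exact hu rfl
    simp [hu_ne]
  exact hs.2 x _ hne ⟨u, hu, List.prefix_append _ _⟩ (append_cycle_mem_coLang hne hx hloop)

theorem exists_injective_of_isReset [Finite Q] (hhd : A.CoHistoryDeterministic)
    (hsafe : ∀ d w, (∀ n, wordSegment w 0 n ∈ SafeLang step d) → w ∈ A.CoLang)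
    (hback : ∀ d, IsReturning step d)
    (hsep : ∀ d e, d ≠ e →
      ((∃ s, IsReset A.CoLang step d s) ∧ ¬ SafeLang step e ⊆ SafeLang step d) ∨
      ((∃ s, IsReset A.CoLang step e s) ∧ ¬ SafeLang step d ⊆ SafeLang step e)) :
    ∃ f : S → Q, Function.Injective f := by
  obtain ⟨r, hr⟩ := hhd
  have hrec (d : S) : ∃ q x, IsPath A.trans A.init x q ∧
      IsRecurrentFor (A.trans \ A.sig) step q d := by
    obtain ⟨p, x, hx, hp⟩ := r.exists_simulates hr (hsafe d) (hback d)
    obtain ⟨q, y, hy, hq⟩ := hp.exists_isRecurrentFor (hback d)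
    exact ⟨q, x ++ y, hx.append (hy.mono Set.sdiff_subset), hq⟩
  choose f x hx hf using hrec
  refine ⟨f, fun d e hde => not_imp_comm.1 (hsep d e) ?_⟩
  rintro (⟨⟨s, hs⟩, h⟩ | ⟨⟨s, hs⟩, h⟩)
  · exact ne_of_isReset hs (hx d) (hf d) (hf e) h hde
  · exact ne_of_isReset hs (hx e) (hf e) (hf d) h hde.symm

end BuchiAutomaton

section Classifier

/-- The states of the classifier from which a block can still be completed: all but
`ℓ₁, …, ℓ₆`. -/
inductive BlockState : Type
  | p | q | t | s | r
deriving DecidableEq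

instance : Fintype BlockState :=
  ⟨{.p, .q, .t, .s, .r}, fun b => by cases b <;> decide⟩

namespace BlockState

/-- The inclusion of the block states into the states of the classifier. -/
def toCSt : BlockState → CSt
  | .p => .p
  | .q => .q
  | .t => .t
  | .s => .s
  | .r => .r

/-- One step of the classifier from a block state; the value `inl β` stands for the state `ℓ_β`,
that is, for the completion of a block of index `β`. -/
def step (b : BlockState) (l : Al) : Option (Fin 6 ⊕ BlockState) :=
  (clStep b.toCSt l).map fun
    | .p => .inr .p
    | .q => .inr .q
    | .t => .inr .t
    | .s => .inr .s
    | .r => .inr .r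
    | .ell β => .inl β

theorem step_eq_inl_iff : ∀ {b : BlockState} {l : Al} {β : Fin 6},
    b.step l = some (.inl β) ↔ clStep b.toCSt l = some (.ell β) := by
  decide

theorem step_eq_inr_iff : ∀ {b : BlockState} {l : Al} {b' : BlockState},
    b.step l = some (.inr b') ↔ clStep b.toCSt l = some b'.toCSt := by
  decide

theorem step_eq_none_iff : ∀ {b : BlockState} {l : Al},
    b.step l = none ↔ ∃ β, l = .res β := by
  decide

end BlockState

theorem clRun_eq_foldlM (c : CSt) (w : List Al) : clRun c w = w.foldlM clStep c := by
  induction w generalizing c with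
  | nil => rfl
  | cons l w ih =>
    rw [clRun, List.foldlM_cons]
    cases clStep c l with
    | none => rfl
    | some c' => exact ih c'

theorem clRun_concat {c c' : CSt} {w : List Al} (h : clRun c w = some c') (l : Al) :
    clRun c (w ++ [l]) = clStep c' l := by
  rw [clRun_eq_foldlM] at h ⊢
  rw [foldlM_append_of_eq_some h, List.foldlM_cons]
  exact bind_pure _

theorem clRun_ell_cons (β : Fin 6) (l : Al) (w : List Al) : clRun (.ell β) (l :: w) = none := by
  cases l <;> rfl

theorem step_of_clRun_cons_eq_ell {b : BlockState} {l : Al} {v : List Al} {β : Fin 6}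
    (h : clRun b.toCSt (l :: v) = some (.ell β)) :
    (b.step l = some (.inl β) ∧ v = []) ∨
      ∃ b', b.step l = some (.inr b') ∧ clRun b'.toCSt v = some (.ell β) := by
  rw [clRun_eq_foldlM, List.foldlM_cons, Option.bind_eq_bind, Option.bind_eq_some_iff] at h
  obtain ⟨c, hc, hv⟩ := h
  rw [← clRun_eq_foldlM] at hv
  rcases hstep : b.step l with _ | α | b'
  · obtain ⟨γ, rfl⟩ := BlockState.step_eq_none_iff.1 hstep
    cases b <;> cases hc
  · obtain rfl := Option.some.inj (hc.symm.trans (BlockState.step_eq_inl_iff.1 hstep))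
    cases v with
    | nil => exact .inl ⟨by cases hv; rfl, rfl⟩
    | cons l v => rw [clRun_ell_cons] at hv; cases hv
  · obtain rfl := Option.some.inj (hc.symm.trans (BlockState.step_eq_inr_iff.1 hstep))
    exact .inr ⟨b', rfl, hv⟩

end Classifier

section Tracking

/-- The state `(α, f, b)` records that the last completed block or reset letter has index `α`,
that the classifier is in the state `b` on the block that is being read, and, if `f` is `true`,
that the last completed block comes right after a block or a reset letter of another index. -/
abbrev TrackState : Type := Fin 6 × Bool × BlockState

/-- The update of the record `(α, f, b)` when a block of index `β` is completed. It is undefined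
when this completes a word of `(L_γ ∪ {r_γ}) L_β L_β` with `γ ≠ β`. -/
def hitStep (α : Fin 6) (f : Bool) (β : Fin 6) : Option TrackState :=
  if β = α then if f then none else some (α, false, .p) else some (β, true, .p)

/-- The update of the record on a letter. -/
def trackStep : TrackState → Al → Option TrackState
  | (α, f, b), l =>
    match b.step l with
    | some (.inl β) => hitStep α f β
    | some (.inr b') => some (α, f, b')
    | none => match l with
      | .res β => some (β, false, .p)
      | _ => none

variable {α β : Fin 6} {f : Bool} {b c : BlockState} {l : Al} {v : List Al}

theorem hitStep_eq_none_or (α : Fin 6) (f : Bool) (β : Fin 6) :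
    hitStep α f β = none ∨ ∃ f', hitStep α f β = some (β, f', .p) := by
  revert α f β
  decide

theorem trackStep_of_inl (h : b.step l = some (.inl β)) :
    trackStep (α, f, b) l = hitStep α f β := by
  simp only [trackStep, h]

theorem trackStep_of_inr (h : b.step l = some (.inr c)) :
    trackStep (α, f, b) l = some (α, f, c) := by
  simp only [trackStep, h]

theorem trackStep_res (d : TrackState) (β : Fin 6) :
    trackStep d (.res β) = some (β, false, .p) := by
  revert d β
  decide

theorem foldlM_trackStep_of_clRun_eq_ell (hv : clRun b.toCSt v = some (.ell β)) :
    v.foldlM trackStep (α, f, b) = hitStep α f β := by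
  induction v generalizing b with
  | nil => cases b <;> cases hv
  | cons l v ih =>
    rw [List.foldlM_cons]
    obtain ⟨hl, rfl⟩ | ⟨b', hl, hv⟩ := step_of_clRun_cons_eq_ell hv
    · rw [trackStep_of_inl hl]
      exact bind_pure _
    · rw [trackStep_of_inr hl]
      exact ih hv

/-- From the state `b` the classifier completes a block at least as early as from `c`, and the
same block if at the same time. -/
def BlockState.Dominates (b c : BlockState) : Prop :=
  c = .p ∨ c = b ∨ (c = .t ∧ b = .s)

instance (b c : BlockState) : Decidable (b.Dominates c) :=
  inferInstanceAs (Decidable (_ ∨ _))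

theorem BlockState.Dominates.step_eq_inl : ∀ {b c : BlockState} {l : Al} {β : Fin 6},
    b.Dominates c → c.step l = some (.inl β) → b.step l = some (.inl β) := by
  decide

theorem BlockState.Dominates.step_of_inr : ∀ {b c : BlockState} {l : Al} {c' : BlockState},
    b.Dominates c → c.step l = some (.inr c') →
      (c' = .p ∧ ∃ β, b.step l = some (.inl β)) ∨
        ∃ b', b.step l = some (.inr b') ∧ b'.Dominates c' := by
  decide

theorem BlockState.Dominates.foldlM_trackStep (hbc : b.Dominates c)
    (hv : clRun c.toCSt v = some (.ell β)) :
    v.foldlM trackStep (α, f, b) = none ∨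
      ∃ f', v.foldlM trackStep (α, f, b) = some (β, f', .p) := by
  induction v generalizing α f b c with
  | nil => cases c <;> cases hv
  | cons l v ih =>
    rw [List.foldlM_cons]
    obtain ⟨hl, rfl⟩ | ⟨c', hl, hv⟩ := step_of_clRun_cons_eq_ell hv
    · rw [trackStep_of_inl (hbc.step_eq_inl hl)]
      exact (bind_pure (hitStep α f β)).symm ▸ hitStep_eq_none_or α f β
    obtain ⟨rfl, γ, hl'⟩ | ⟨b', hl', hbc'⟩ := hbc.step_of_inr hl
    · rw [trackStep_of_inl hl']
      obtain h | ⟨f', h⟩ := hitStep_eq_none_or α f γ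
      · exact .inl (by rw [h]; rfl)
      · rw [h]
        exact ih (.inl rfl) hv
    · rw [trackStep_of_inr hl']
      exact ih hbc' hv

end Tracking

section BadInfixes

/-- The language `L_α ∪ {r_α}`. -/
def Marker (α : Fin 6) : Set (List Al) :=
  Lcl α ∪ {[.res α]}

/-- The words of `(L_α ∪ {r_α}) L_β L_β` for some `α ≠ β`. -/
def BadWord (k : List Al) : Prop :=
  ∃ α β, α ≠ β ∧ ∃ v₁ ∈ Marker α, ∃ v₂ ∈ Lcl β, ∃ v₃ ∈ Lcl β, k = v₁ ++ v₂ ++ v₃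

/-- The words with an infix in `(L_α ∪ {r_α}) L_β L_β` for some `α ≠ β`. -/
def HasBadInfix (w : List Al) : Prop :=
  ∃ k, BadWord k ∧ k <:+: w

theorem HasBadInfix.of_isInfix {v w : List Al} (hv : HasBadInfix v) (h : v <:+: w) :
    HasBadInfix w :=
  let ⟨k, hk, hkv⟩ := hv
  ⟨k, hk, hkv.trans h⟩

theorem foldlM_trackStep_marker {α : Fin 6} {v : List Al} (hv : v ∈ Marker α) (d : TrackState) :
    v.foldlM trackStep d = none ∨ ∃ f, v.foldlM trackStep d = some (α, f, .p) := by
  obtain hv | rfl := hv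
  · exact BlockState.Dominates.foldlM_trackStep (.inl rfl) hv
  · exact .inr ⟨false, by rw [List.foldlM_cons, trackStep_res]; rfl⟩

theorem BadWord.foldlM_trackStep {k : List Al} (hk : BadWord k) (d : TrackState) :
    k.foldlM trackStep d = none := by
  obtain ⟨α, β, hαβ, v₁, hv₁, v₂, hv₂, v₃, hv₃, rfl⟩ := hk
  rw [List.append_assoc]
  obtain h₁ | ⟨f, h₁⟩ := foldlM_trackStep_marker hv₁ d
  · exact foldlM_append_of_eq_none h₁
  have h₂ : v₂.foldlM trackStep (α, f, .p) = some (β, true, .p) :=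
    (foldlM_trackStep_of_clRun_eq_ell (b := .p) hv₂).trans (if_neg hαβ.symm)
  have h₃ : v₃.foldlM trackStep (β, true, .p) = none :=
    (foldlM_trackStep_of_clRun_eq_ell (b := .p) hv₃).trans (if_pos rfl)
  rw [foldlM_append_of_eq_some h₁, foldlM_append_of_eq_some h₂, h₃]

theorem HasBadInfix.notMem_safeLang {w : List Al} (hw : HasBadInfix w) (d : TrackState) :
    w ∉ SafeLang trackStep d := by
  obtain ⟨k, hk, x, z, rfl⟩ := hw
  rw [notMem_safeLang_iff, List.append_assoc]
  rcases hx : x.foldlM trackStep d with _ | e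
  · exact foldlM_append_of_eq_none hx
  · rw [foldlM_append_of_eq_some hx, foldlM_append_of_eq_none (hk.foldlM_trackStep e)]

/-- `w` ends with the blocks that are described by the state: the last completed block ends with
the prefix `h` of `w`, and the block that is being read is the rest `g`. -/
def Tracks (w : List Al) : TrackState → Prop
  | (α, f, b) => ∃ h g, w = h ++ g ∧ clRun .p g = some b.toCSt ∧ (∃ v ∈ Marker α, v <:+ h) ∧
      (f → ∃ β, β ≠ α ∧ ∃ v₁ ∈ Marker β, ∃ v₂ ∈ Lcl α, v₁ ++ v₂ <:+ h)

variable {w : List Al} {α β : Fin 6} {f : Bool} {b c : BlockState} {l : Al} {d : TrackState}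

theorem tracks_concat_res (w : List Al) (β : Fin 6) : Tracks (w ++ [.res β]) (β, false, .p) :=
  ⟨w ++ [.res β], [], by simp, rfl, ⟨_, .inr rfl, List.suffix_append _ _⟩, nofun⟩

theorem Tracks.concat_of_inr (h : Tracks w (α, f, b)) (hl : b.step l = some (.inr c)) :
    Tracks (w ++ [l]) (α, f, c) := by
  obtain ⟨x, g, rfl, hg, hmarker, hf⟩ := h
  exact ⟨x, g ++ [l], by simp, (clRun_concat hg l).trans (BlockState.step_eq_inr_iff.1 hl),
    hmarker, hf⟩

theorem Tracks.concat_of_inl (h : Tracks w (α, f, b)) (hl : b.step l = some (.inl β)) :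
    (∃ e, hitStep α f β = some e ∧ Tracks (w ++ [l]) e) ∨ HasBadInfix (w ++ [l]) := by
  obtain ⟨x, g, rfl, hg, ⟨v, hv, hvx⟩, hf⟩ := h
  have hblock : g ++ [l] ∈ Lcl β := (clRun_concat hg l).trans (BlockState.step_eq_inl_iff.1 hl)
  have hsuffix : g ++ [l] <:+ x ++ g ++ [l] := by simp [List.suffix_append]
  have hassoc : x ++ g ++ [l] = x ++ (g ++ [l]) := List.append_assoc ..
  by_cases hβ : β = α
  · subst hβ
    cases f with
    | false =>
      exact .inl ⟨_, if_pos rfl, x ++ g ++ [l], [], by simp, rfl,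
        ⟨_, .inl hblock, hsuffix⟩, nofun⟩
    | true =>
      obtain ⟨γ, hγ, v₁, hv₁, v₂, hv₂, hx⟩ := hf rfl
      refine .inr ⟨v₁ ++ v₂ ++ (g ++ [l]), ⟨γ, β, hγ, v₁, hv₁, v₂, hv₂, _, hblock, rfl⟩, ?_⟩
      rw [hassoc]
      exact (List.suffix_append_self_iff.2 hx).isInfix
  · refine .inl ⟨_, if_neg hβ, x ++ g ++ [l], [], by simp, rfl, ⟨_, .inl hblock, hsuffix⟩,
      fun _ => ⟨α, Ne.symm hβ, v, hv, _, hblock, ?_⟩⟩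
    rw [hassoc]
    exact List.suffix_append_self_iff.2 hvx

theorem Tracks.concat (h : Tracks w d) (l : Al) :
    (∃ e, trackStep d l = some e ∧ Tracks (w ++ [l]) e) ∨ HasBadInfix (w ++ [l]) := by
  obtain ⟨α, f, b⟩ := d
  rcases hl : b.step l with _ | β | c
  · obtain ⟨β, rfl⟩ := BlockState.step_eq_none_iff.1 hl
    exact .inl ⟨_, trackStep_res _ _, tracks_concat_res w β⟩
  · rw [trackStep_of_inl hl]
    exact h.concat_of_inl hl
  · exact .inl ⟨_, trackStep_of_inr hl, h.concat_of_inr hl⟩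

theorem Tracks.hasBadInfix_append {x : List Al} (h : Tracks w d) (hx : x ∉ SafeLang trackStep d) :
    HasBadInfix (w ++ x) := by
  rw [notMem_safeLang_iff] at hx
  induction x generalizing w d with
  | nil => cases hx
  | cons l x ih =>
    rw [← List.singleton_append, ← List.append_assoc]
    obtain ⟨e, he, hw⟩ | hw := h.concat l
    · rw [List.foldlM_cons, he] at hx
      exact ih hw hx
    · exact hw.of_isInfix (List.prefix_append _ _).isInfix

end BadInfixes

section SafetyAutomaton

/-- The safety automaton with 61 states: the tracking states, on which a bad infix is an error,
and the state `none`, on which the letter `y` is an error. -/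
def safeStep : Option TrackState → Al → Option (Option TrackState)
  | some d, l => (trackStep d l).map some
  | none, l => if l = .y then none else some none

theorem foldlM_safeStep_some (d : TrackState) (u : List Al) :
    u.foldlM safeStep (some d) = (u.foldlM trackStep d).map some := by
  induction u generalizing d with
  | nil => rfl
  | cons l u ih =>
    simp only [List.foldlM_cons, safeStep]
    cases trackStep d l with
    | none => rfl
    | some e => exact ih e

theorem safeLang_safeStep_some (d : TrackState) :
    SafeLang safeStep (some d) = SafeLang trackStep d := by
  ext u
  simp only [SafeLang, Set.mem_ofPred_eq, foldlM_safeStep_some, Option.isSome_map]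

theorem foldlM_safeStep_none (u : List Al) :
    u.foldlM safeStep none = if .y ∈ u then none else some none := by
  induction u with
  | nil => rfl
  | cons l u ih =>
    by_cases hl : l = .y
    · simp [safeStep, hl]
    · simpa [safeStep, hl, Ne.symm hl] using ih

theorem mem_safeLang_safeStep_none {u : List Al} : u ∈ SafeLang safeStep none ↔ .y ∉ u := by
  rw [← not_iff_not, notMem_safeLang_iff, foldlM_safeStep_none]
  simp

theorem LMain_eq : LMain = omegaPow {w | ∃ u, HasBadInfix u ∧ w = u ++ [.y]} := by
  refine congrArg omegaPow (Set.ext fun w => ⟨?_, ?_⟩)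
  · rintro ⟨α, β, hαβ, x, v₁, v₂, v₃, z, hv₁, hv₂, hv₃, rfl⟩
    exact ⟨_, ⟨_, ⟨α, β, hαβ, v₁, hv₁, v₂, hv₂, v₃, hv₃, rfl⟩, x, z, by simp⟩, rfl⟩
  · rintro ⟨_, ⟨_, ⟨α, β, hαβ, v₁, hv₁, v₂, hv₂, v₃, hv₃, rfl⟩, x, z, rfl⟩, rfl⟩
    exact ⟨α, β, hαβ, x, v₁, v₂, v₃, z, hv₁, hv₂, hv₃, by simp⟩

theorem mem_compl_LMain_of_safe {d : Option TrackState} {w : ℕ → Al}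
    (h : ∀ n, wordSegment w 0 n ∈ SafeLang safeStep d) : w ∈ LMainᶜ := by
  rw [LMain_eq]
  rintro ⟨φ, hφ0, -, hφ⟩
  obtain ⟨u, hu, hw⟩ := hφ 0
  have hsafe := h (φ 1)
  rw [← hφ0, hw] at hsafe
  cases d with
  | none => exact mem_safeLang_safeStep_none.1 hsafe (by simp)
  | some d =>
    rw [safeLang_safeStep_some] at hsafe
    exact hu.notMem_safeLang d (mem_safeLang_of_isPrefix (List.prefix_append _ _) hsafe)

theorem append_cycle_mem_LMain {v : List Al} (hv : HasBadInfix v) (x : List Al) :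
    (x ++ₛ Stream'.cycle (.y :: v) (List.cons_ne_nil _ _)).get ∈ LMain := by
  set C := Stream'.cycle (.y :: v) (List.cons_ne_nil _ _)
  have hC : C = Stream'.cons .y (v ++ₛ C) := Stream'.cycle_eq _ _
  have hperiod : v ++ₛ C = (v ++ [.y]) ++ₛ (v ++ₛ C) := by
    rw [Stream'.append_append_stream]
    exact congrArg (v ++ₛ ·) hC
  have hsplit : x ++ₛ C = (x ++ .y :: v ++ [.y]) ++ₛ (v ++ₛ C) := by
    rw [List.append_assoc, Stream'.append_append_stream, List.cons_append,
      Stream'.cons_append_stream, ← hperiod, ← hC]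
  have hxv : HasBadInfix (x ++ .y :: v) := hv.of_isInfix ⟨x ++ [.y], [], by simp⟩
  rw [hsplit, LMain_eq]
  exact append_mem_omegaPow ⟨_, hxv, rfl⟩ (by simp)
    (mem_omegaPow_of_eq_append ⟨v, hv, rfl⟩ (by simp) hperiod)

end SafetyAutomaton

section Separation

/-- A word on which exactly one block, of index `α`, is completed from every state. -/
def hitWord (α : Fin 6) : List Al :=
  if α.val < 3 then [.y, .c, .num α] else [.y, .a, .b, .num α]

theorem foldlM_hitWord (α γ : Fin 6) (f : Bool) (b : BlockState) :
    (hitWord α).foldlM trackStep (γ, f, b) = hitStep γ f α := by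
  revert α γ f b
  decide

/-- A word leading the classifier from `p` to `b`. -/
def blockWord : BlockState → List Al
  | .p => []
  | .q => [.a]
  | .t => [.c]
  | .s => [.a, .c]
  | .r => [.a, .b]

/-- The index of the reset letter to be read before `syncTail d` in order to reach `d`. -/
def syncIndex : TrackState → Fin 6
  | (α, f, _) => if f then α + 1 else α

/-- A word leading to `d` after the reset letter of index `syncIndex d`. -/
def syncTail : TrackState → List Al
  | (α, f, b) => (if f then hitWord α else []) ++ blockWord b

/-- A synchronizing word: it leads from every tracking state to `d`. -/
def syncWord (d : TrackState) : List Al :=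
  .y :: .res (syncIndex d) :: syncTail d

theorem foldlM_syncTail (d : TrackState) :
    (syncTail d).foldlM trackStep (syncIndex d, false, .p) = some d := by
  revert d
  decide

theorem trackStep_y (α : Fin 6) (f : Bool) (b : BlockState) :
    trackStep (α, f, b) .y = some (α, f, .p) := by
  cases b <;> rfl

theorem foldlM_syncWord (d e : TrackState) : (syncWord e).foldlM trackStep d = some e := by
  obtain ⟨α, f, b⟩ := d
  rw [syncWord, List.foldlM_cons, trackStep_y, Option.bind_eq_bind, Option.bind_some,
    List.foldlM_cons, trackStep_res]
  exact foldlM_syncTail e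

theorem isReturning_safeStep (d : Option TrackState) : IsReturning safeStep d := by
  intro u hu
  cases d with
  | none =>
    refine ⟨[], ?_⟩
    rw [List.append_nil, foldlM_safeStep_none, if_neg (mem_safeLang_safeStep_none.1 hu)]
  | some d =>
    rw [safeLang_safeStep_some] at hu
    obtain ⟨e, he⟩ := mem_safeLang_iff.1 hu
    refine ⟨syncWord d, ?_⟩
    rw [foldlM_safeStep_some, foldlM_append_of_eq_some he, foldlM_syncWord, Option.map_some]

theorem hasBadInfix_sync {d : TrackState} {u : List Al} (hu : u ∉ SafeLang trackStep d) :
    HasBadInfix (.res (syncIndex d) :: syncTail d ++ u) := by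
  refine (tracks_concat_res [] (syncIndex d)).hasBadInfix_append (x := syncTail d ++ u) ?_
  rwa [notMem_safeLang_iff, foldlM_append_of_eq_some (foldlM_syncTail d), ← notMem_safeLang_iff]

theorem isReset_syncWord (d : TrackState) : IsReset LMainᶜ safeStep (some d) (syncWord d) := by
  refine ⟨by rw [foldlM_safeStep_some, foldlM_syncWord, Option.map_some], ?_⟩
  rintro x _ _ ⟨u, hu, z, rfl⟩
  rw [safeLang_safeStep_some] at hu
  exact not_not.2 <|
    append_cycle_mem_LMain ((hasBadInfix_sync hu).of_isInfix (List.prefix_append _ z).isInfix) x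

theorem hitWord_mem_safeLang_iff {α γ : Fin 6} {f : Bool} {b : BlockState} :
    hitWord γ ∈ SafeLang trackStep (α, f, b) ↔ ¬ (γ = α ∧ f = true) := by
  simp only [SafeLang, Set.mem_ofPred_eq, foldlM_hitWord]
  revert α γ f
  decide

theorem hitWord_append_hitWord_mem_safeLang_iff {α γ : Fin 6} {f : Bool} {b : BlockState} :
    hitWord γ ++ hitWord γ ∈ SafeLang trackStep (α, f, b) ↔ γ = α ∧ f = false := by
  revert α γ f b
  simp only [SafeLang, Set.mem_ofPred_eq, List.foldlM_append, foldlM_hitWord]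
  decide

/-- Words separating any two block states. If the first part of such a word completes a block of
an index other than `α`, then the second part completes the same block again and is an error. -/
def blockTests (α : Fin 6) : List (List Al) :=
  let β : Fin 6 := if α = 0 then 1 else 0
  let γ : Fin 6 := if α = 3 then 4 else 3
  [.num β :: hitWord β, .num γ :: hitWord γ, .b :: .num γ :: hitWord γ]

theorem exists_mem_blockTests_isSome_ne : ∀ {α : Fin 6} {f : Bool} {b c : BlockState}, b ≠ c →
    ∃ v ∈ blockTests α,
      (v.foldlM trackStep (α, f, b)).isSome ≠ (v.foldlM trackStep (α, f, c)).isSome := by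
  decide

theorem safeLang_trackStep_injective : Function.Injective (SafeLang trackStep) := by
  rintro ⟨α, f, b⟩ ⟨β, g, c⟩ h
  have hiff (v : List Al) :
      v ∈ SafeLang trackStep (α, f, b) ↔ v ∈ SafeLang trackStep (β, g, c) := by
    rw [h]
  have hone := hiff (hitWord α)
  have htwo := hiff (hitWord α ++ hitWord α)
  rw [hitWord_mem_safeLang_iff, hitWord_mem_safeLang_iff] at hone
  rw [hitWord_append_hitWord_mem_safeLang_iff, hitWord_append_hitWord_mem_safeLang_iff] at htwo
  obtain ⟨rfl, rfl⟩ : α = β ∧ f = g := by grind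
  by_contra hne
  have hbc : b ≠ c := by grind
  obtain ⟨v, -, hv⟩ := exists_mem_blockTests_isSome_ne (α := α) (f := f) hbc
  exact hv (Bool.eq_iff_iff.2 (hiff v))

theorem not_safeLang_none_subset (d : TrackState) :
    ¬ SafeLang safeStep none ⊆ SafeLang safeStep (some d) := by
  refine Set.not_subset.2 ⟨[.res 0, .c, .num 1, .c, .num 1],
    mem_safeLang_safeStep_none.2 (by decide), ?_⟩
  rw [notMem_safeLang_iff, foldlM_safeStep_some, List.foldlM_cons, trackStep_res]
  rfl

theorem isReset_and_not_safeLang_subset {d e : Option TrackState} (hde : d ≠ e) :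
    ((∃ s, IsReset LMainᶜ safeStep d s) ∧ ¬ SafeLang safeStep e ⊆ SafeLang safeStep d) ∨
      ((∃ s, IsReset LMainᶜ safeStep e s) ∧ ¬ SafeLang safeStep d ⊆ SafeLang safeStep e) := by
  rcases d with _ | d <;> rcases e with _ | e
  · exact absurd rfl hde
  · exact .inr ⟨⟨_, isReset_syncWord e⟩, not_safeLang_none_subset e⟩
  · exact .inl ⟨⟨_, isReset_syncWord d⟩, not_safeLang_none_subset d⟩
  · have hne : SafeLang trackStep d ≠ SafeLang trackStep e :=
      safeLang_trackStep_injective.ne (ne_of_apply_ne some hde)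
    simp only [safeLang_safeStep_some]
    obtain h | h := not_and_or.1 (mt Set.Subset.antisymm_iff.2 hne)
    · exact .inr ⟨⟨_, isReset_syncWord e⟩, h⟩
    · exact .inl ⟨⟨_, isReset_syncWord d⟩, h⟩

end Separation

/-- Every history-deterministic coBüchi automaton recognising
the complement of `L_main` has at least 61 states. -/
theorem hd_cobuchi_for_compl_LMain_ge_61 {Q : Type} [Fintype Q] (A : BuchiAutomaton Al Q)
    (hhd : A.CoHistoryDeterministic) (hlang : A.CoLang = LMainᶜ) :
    61 ≤ Fintype.card Q := by
  obtain ⟨f, hf⟩ : ∃ f : Option TrackState → Q, Function.Injective f :=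
    BuchiAutomaton.exists_injective_of_isReset hhd
      (fun _ _ hw => hlang ▸ mem_compl_LMain_of_safe hw) isReturning_safeStep
      (fun _ _ hde => hlang ▸ isReset_and_not_safeLang_subset hde)
  calc 61 = Fintype.card (Option TrackState) := by decide
    _ ≤ Fintype.card Q := Fintype.card_le_of_injective f hf
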